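/- Let k ≥ 2 and let λ ⊢ kp be a partition with empty k-core and k-quotient quot_k(λ) = (λ_1,…,λ_k). If each λ_i is either the empty partition or has exactly one (nonzero) part, then Σ_{μ ⊢ p} (1/z_μ) · χ^λ_{kμ} = sign(π_λ); if some λ_i has at least two nonzero parts, then Σ_{μ ⊢ p} (1/z_μ) · χ^λ_{kμ} = 0. -/

import Mathlib

open scoped BigOperators

namespace RimHookPaper

/-- A partition: a weakly decreasing, eventually-zero sequence of naturals;
`parts n` is the `(n+1)`-st part. -/
structure Partition : Type where
  parts : ℕ → ℕ
  antitone : ∀ ⦃i j : ℕ⦄, i ≤ j → parts j ≤ parts i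
  eventually_zero : ∃ N : ℕ, ∀ i : ℕ, N ≤ i → parts i = 0

namespace Partition

/-- The size `|λ|` of a partition. -/
noncomputable def size (P : Partition) : ℕ := ∑ᶠ i, P.parts i

/-- The empty partition. -/
def empty : Partition := ⟨fun _ => 0, fun _ _ _ => le_rfl, ⟨0, fun _ _ => rfl⟩⟩

/-- The number of nonzero parts of a partition. -/
noncomputable def length (P : Partition) : ℕ := sInf {N | P.parts N = 0}

/-- The cells of the Young diagram of a partition. -/
def cells (P : Partition) : Set (ℕ × ℕ) := {c | c.2 < P.parts c.1}

instance : LE Partition := ⟨fun Q P => ∀ i, Q.parts i ≤ P.parts i⟩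

/-- The skew shape `P / Q` (as a set of cells). -/
def skew (P Q : Partition) : Set (ℕ × ℕ) := P.cells \ Q.cells

end Partition

/-- Edge-adjacency of cells. -/
def Adj (c d : ℕ × ℕ) : Prop :=
  (c.1 = d.1 ∧ (c.2 + 1 = d.2 ∨ d.2 + 1 = c.2)) ∨
    (c.2 = d.2 ∧ (c.1 + 1 = d.1 ∨ d.1 + 1 = c.1))

/-- A set of cells is (edge-)connected. -/
def IsConnectedSet (S : Set (ℕ × ℕ)) : Prop :=
  ∀ c ∈ S, ∀ d ∈ S, Relation.ReflTransGen (fun x y => x ∈ S ∧ y ∈ S ∧ Adj x y) c d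

/-- `S` contains no 2×2 square. -/
def NoSquare (S : Set (ℕ × ℕ)) : Prop :=
  ¬ ∃ i j : ℕ, (i, j) ∈ S ∧ (i + 1, j) ∈ S ∧ (i, j + 1) ∈ S ∧ (i + 1, j + 1) ∈ S

/-- `P / Q` is a rim hook (border strip) of length `t`: a nonempty connected skew
shape with no 2×2 square, consisting of `t` boxes. -/
def IsRimHook (P Q : Partition) (t : ℕ) : Prop :=
  Q ≤ P ∧ (P.skew Q).Nonempty ∧ IsConnectedSet (P.skew Q) ∧ NoSquare (P.skew Q) ∧
    (P.skew Q).ncard = t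

/-- One step of a rim hook tableau: an empty hook (`t = 0`) or a rim hook of length `t`. -/
def IsStep (P Q : Partition) (t : ℕ) : Prop :=
  (t = 0 ∧ P = Q) ∨ (0 < t ∧ IsRimHook P Q t)

/-- Number of rows met by a set of cells. -/
noncomputable def rowCount (S : Set (ℕ × ℕ)) : ℕ := (Prod.fst '' S).ncard

/-- A rim hook tableau of shape `P` and type `μ`: a chain
`∅ = λ⁰ ⊆ λ¹ ⊆ ⋯ ⊆ λʳ = P` with each `λⁱ/λⁱ⁻¹` a (possibly empty)
rim hook of length `μᵢ`. -/
structure RHT (P : Partition) (μ : List ℕ) : Type where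
  chain : Fin (μ.length + 1) → Partition
  chain_zero : chain 0 = Partition.empty
  chain_last : chain (Fin.last μ.length) = P
  step : ∀ j : Fin μ.length, IsStep (chain j.succ) (chain j.castSucc) (μ.get j)

/-- The total height of a rim hook tableau: the sum of the heights
(number of rows minus one) of its nonempty rim hooks. -/
noncomputable def RHT.height {P : Partition} {μ : List ℕ} (T : RHT P μ) : ℕ :=
  ∑ j : Fin μ.length, (rowCount ((T.chain j.succ).skew (T.chain j.castSucc)) - 1)

/-- The character value `χ^λ_μ` of the symmetric group, via the
Murnaghan–Nakayama rule. -/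
noncomputable def chiAux (P : Partition) (μ : List ℕ) : ℤ :=
  ∑ᶠ T : RHT P μ, (-1 : ℤ) ^ T.height

/-- The parts of a multiset, listed in weakly decreasing order. -/
def typeList (μ : Multiset ℕ) : List ℕ := (μ.sort (· ≤ ·)).reverse

/-- `χ^λ_μ` for a multiset type `μ`. -/
noncomputable def chi (P : Partition) (μ : Multiset ℕ) : ℤ := chiAux P (typeList μ)

/-- `z_μ = ∏_j m_j! · j^{m_j}` where `μ` has `m_j` parts equal to `j`. -/
def zpart (μ : Multiset ℕ) : ℕ := μ.prod * ∏ j ∈ μ.toFinset, (μ.count j).factorial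

/-- `χ^λ(σ)`: the character evaluated at a permutation, via its full cycle type
(including fixed points as parts equal to 1). -/
noncomputable def chiPerm (P : Partition) {m : ℕ} (σ : Equiv.Perm (Fin m)) : ℤ :=
  chi P (σ.cycleType + Multiset.replicate (m - σ.cycleType.sum) 1)

/-- Position of the zero (up step) corresponding to row `n` in the 0/1 sequence
`s(P)`, where the median of `s(P)` is the gap just below position `0`. -/
def zpos (P : Partition) (n : ℕ) : ℤ := (P.parts n : ℤ) - (n : ℤ) - 1

/-- `s(P)` has a `0` (an up step) at position `x`; otherwise it has a `1`. -/
def isZeroAt (P : Partition) (x : ℤ) : Prop := ∃ n : ℕ, zpos P n = x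

/-- `Q` is the `k`-quotient of `P`: for each residue `i`, the 0/1 sequence of `Q i`
is (up to the shift `d` recording the position of its median) the subsequence of
`s(P)` consisting of every `k`-th digit, including the `(i+1)`-st digit after the
median of `s(P)`. -/
def IsKQuotient (k : ℕ) (P : Partition) (Q : Fin k → Partition) : Prop :=
  ∀ i : Fin k, ∃ d : ℤ, ∀ j : ℤ,
    isZeroAt (Q i) j ↔ isZeroAt P (((i : ℕ) : ℤ) + (j + d) * (k : ℤ))

/-- `C` is the `k`-core of `P`: it is obtained from `P` by successively removing
rim hooks of length `k`, as long as possible. -/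
def IsKCore (k : ℕ) (P C : Partition) : Prop :=
  Relation.ReflTransGen (fun A B => IsRimHook A B k) P C ∧ ¬ ∃ C', IsRimHook C C' k

/-- The map on row indices induced by moving the zero in row `m` down (left)
to row `m'`, the zeros in rows `m+1,…,m'` each moving up one row. -/
def cycleFun (m m' n : ℕ) : ℕ :=
  if n = m then m' else if m < n ∧ n ≤ m' then n - 1 else n

/-- One tracking step for the zero permutation: passing from `A` to `B` by removing
a rim hook, encoded on the 0/1 sequence as interchanging a `1` with a later `0`
(the moved zero, in row `m` of `A`, jumps over `m' - m` zeros, landing in row `m'`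
of `B`); the row of each labeled zero is updated by `cycleFun m m'`. -/
def StepTrack (A B : Partition) (f g : ℕ → ℕ) : Prop :=
  (A = B ∧ g = f) ∨
    ∃ m m' : ℕ, m ≤ m' ∧
      (∀ n, n < m → zpos B n = zpos A n) ∧
      (∀ n, m ≤ n → n < m' → zpos B n = zpos A (n + 1)) ∧
      (∀ n, m' < n → zpos B n = zpos A n) ∧
      g = fun i => cycleFun m m' (f i)

/-- `π` is the zero permutation of the rim hook tableau `T`: label the zeros of
`s(P)` succeeding the first one by `1,…,ℓ(P)` from left to right (`q j i` is the
row of label `i+1` at stage `j` of the peeling, rows counted from the top), peel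
the rim hooks of `T` in order of decreasing entries, and read off the labels in
the final sequence `s(∅)` from left to right. -/
def IsZeroPerm {P : Partition} {μ : List ℕ} (T : RHT P μ)
    (π : Equiv.Perm (Fin P.length)) : Prop :=
  ∃ q : Fin (μ.length + 1) → ℕ → ℕ,
    (∀ i : ℕ, i < P.length → q (Fin.last μ.length) i = P.length - 1 - i) ∧
    (∀ j : Fin μ.length,
      StepTrack (T.chain j.succ) (T.chain j.castSucc) (q j.succ) (q j.castSucc)) ∧
    (∀ i : Fin P.length, q 0 ((π i : ℕ)) = P.length - 1 - (i : ℕ))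

/-- `ω(T) = (T₁,…,T_k)`: the rim hook tableau `T` (all of whose hook lengths are
divisible by `k`) decomposes into the `k`-tuple of rim hook tableaux `Ti` on the
`k`-quotient: each step of `T`, removing a hook of length `k·t`, affects exactly
one subsequence (mod `k`) of the 0/1 sequence, i.e. removes a hook of length `t`
from exactly one of the quotient partitions. -/
def OmegaRel (k : ℕ) {P : Partition} {κ : List ℕ} (T : RHT P κ)
    {Q : Fin k → Partition} {ν : Fin k → List ℕ}
    (Ti : ∀ i : Fin k, RHT (Q i) (ν i)) : Prop :=
  ∃ (QC : Fin (κ.length + 1) → Fin k → Partition) (a : Fin κ.length → Fin k),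
    (∀ j, IsKQuotient k (T.chain j) (QC j)) ∧
    (∀ j : Fin κ.length, ∀ i, i ≠ a j → QC j.castSucc i = QC j.succ i) ∧
    (∀ j : Fin κ.length, ∃ t : ℕ, κ.get j = k * t ∧
      IsStep (QC j.succ (a j)) (QC j.castSucc (a j)) t) ∧
    (∀ i : Fin k, ∃ e : Fin (ν i).length → Fin κ.length,
      StrictMono e ∧ (∀ s, a (e s) = i) ∧ (∀ j, a j = i → ∃ s, e s = j) ∧
      (∀ s, k * (ν i).get s = κ.get (e s)) ∧
      (Ti i).chain 0 = QC 0 i ∧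
      (∀ s : Fin (ν i).length, (Ti i).chain s.succ = QC (Fin.succ (e s)) i))

/-!
Removing a rim hook of length `t` moves a zero of `s(λ)` to the left by `t` places. Recording the
positions of the zeros of `s(λ)` as an exponent vector `β(λ)` in `N` variables, the
Murnaghan–Nakayama rule says that `χ^λ_μ` is the coefficient of `x^β(λ)` in `a_β(∅) · p_μ`, where
`a` denotes the alternant. Since `∑ p_μ / z_μ = h_p`, the sum in question is the coefficient of
`x^β(λ)` in `a_β(∅) · h_p(x₁^k, …, x_N^k)`. Expanding the alternant turns this into the determinant
of the 0/1 matrix which records the zeros of `s(λ)` that slide, `k` places at a time, to a given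
zero of `s(∅)`.

Only the rightmost zero of `s(∅)` to which a given zero slides matters for its row. If these targets
are distinct, the matrix is that of `s(∅)`, which is unitriangular, with its rows permuted by a
permutation of the sign of `π_λ`; otherwise two rows agree. The targets of two zeros agree exactly
when both zeros belong to the same `s(λ_i)` and lie weakly to the right of the last zero of `s(∅)`
there; this happens exactly when some `λ_i` has at least two parts.
-/

section ZeroPositions

lemma zpos_strictAnti (P : Partition) : StrictAnti (zpos P) := fun i j hij ↦ by
  have := P.antitone hij.le
  simp only [zpos]
  lia

lemma zpos_injective : Function.Injective zpos := by
  rintro ⟨a, _, _⟩ ⟨b, _, _⟩ h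
  have hab : a = b := funext fun n ↦ by simpa [zpos] using congrFun h n
  subst hab
  rfl

lemma zpos_empty (n : ℕ) : zpos .empty n = -n - 1 := by
  simp [zpos, Partition.empty]

lemma zpos_of_le {P : Partition} {N n : ℕ} (hN : P.parts N = 0) (hn : N ≤ n) :
    zpos P n = -n - 1 := by
  have := P.antitone hn
  simp only [zpos]
  lia

lemma neg_le_zpos_iff {P : Partition} {N n : ℕ} (hN : P.parts N = 0) :
    -(N : ℤ) ≤ zpos P n ↔ n < N := by
  refine ⟨fun h ↦ ?_, fun h ↦ ?_⟩
  · by_contra! hn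
    have := zpos_of_le hN hn
    lia
  · simp only [zpos]
    lia

lemma parts_length (P : Partition) : P.parts P.length = 0 := by
  obtain ⟨N, hN⟩ := P.eventually_zero
  exact Nat.sInf_mem (s := {N | P.parts N = 0}) ⟨N, hN N le_rfl⟩

lemma exists_zpos_eq {z : ℕ → ℤ} (hz : StrictAnti z) {N : ℕ} (hN : ∀ n ≥ N, z n = -n - 1) :
    ∃ P : Partition, zpos P = z := by
  have hanti : Antitone fun n : ℕ ↦ z n + n + 1 := antitone_nat_of_succ_le fun n ↦ by
    have := hz n.lt_succ_self
    push_cast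
    lia
  have hnonneg (n : ℕ) : 0 ≤ z n + n + 1 := by
    have := hanti (le_max_left n N)
    have := hN _ (le_max_right n N)
    lia
  refine ⟨⟨fun n ↦ (z n + n + 1).toNat, fun i j hij ↦ Int.toNat_le_toNat (hanti hij),
    N, fun n hn ↦ by rw [hN n hn]; lia⟩, funext fun n ↦ ?_⟩
  have := hnonneg n
  simp only [zpos]
  lia

end ZeroPositions

section BeadMoves

/-- The zeros of `s(B)` arise from those of `s(A)` by moving the zero of row `m` to the left until
it becomes the zero of row `m'`; the zeros jumped over move up by one row. The length of the jump
is `zpos A m - zpos B m'`; it is not required to be positive. -/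
structure IsBeadMove (A B : Partition) (m m' : ℕ) : Prop where
  le : m ≤ m'
  above : ∀ n < m, zpos B n = zpos A n
  between : ∀ n, m ≤ n → n < m' → zpos B n = zpos A (n + 1)
  below : ∀ n, m' < n → zpos B n = zpos A n

variable {A B : Partition} {m m' : ℕ}

lemma mem_skew {c : ℕ × ℕ} : c ∈ A.skew B ↔ B.parts c.1 ≤ c.2 ∧ c.2 < A.parts c.1 := by
  simp [Partition.skew, Partition.cells, and_comm]

lemma ncard_skew {M : ℕ} (hM : A.parts M = 0) :
    (A.skew B).ncard = ∑ n ∈ Finset.range M, (A.parts n - B.parts n) := by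
  have hskew : A.skew B = ((Finset.range M).sigma fun n ↦
      Finset.Ico (B.parts n) (A.parts n)).map (Equiv.sigmaEquivProd ℕ ℕ).toEmbedding := by
    ext c
    have hrow (hc : c.2 < A.parts c.1) : c.1 < M := by
      by_contra! hMc
      have := A.antitone hMc
      lia
    simp only [mem_skew, Finset.coe_map, Equiv.coe_toEmbedding, Equiv.image_eq_preimage_symm,
      Set.mem_preimage, Finset.mem_coe, Finset.mem_sigma, Finset.mem_range, Finset.mem_Ico,
      Equiv.sigmaEquivProd_symm_apply]
    tauto
  rw [hskew, Set.ncard_coe_finset, Finset.card_map, Finset.card_sigma]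
  simp only [Nat.card_Ico]

lemma IsBeadMove.sum_zpos_sub (h : IsBeadMove A B m m') {M : ℕ} (hM : m' < M) :
    ∑ n ∈ Finset.range M, (zpos A n - zpos B n) = zpos A m - zpos B m' := by
  have hpartial (j : ℕ) : ∑ n ∈ Finset.range j, (zpos A n - zpos B n) =
      if j ≤ m then 0 else if j ≤ m' then zpos A m - zpos A j else zpos A m - zpos B m' := by
    induction j with
    | zero => simp
    | succ j ih =>
      rw [Finset.sum_range_succ, ih]
      grind [h.le, h.above j, h.between j, h.below j]
  grind [h.le, hpartial M]

lemma IsBeadMove.ncard_skew (h : IsBeadMove A B m m') (hle : B ≤ A) :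
    ((A.skew B).ncard : ℤ) = zpos A m - zpos B m' := by
  obtain ⟨M, hM⟩ := A.eventually_zero
  rw [RimHookPaper.ncard_skew (hM (M + m' + 1) (by lia)),
    ← h.sum_zpos_sub (M := M + m' + 1) (by lia), Nat.cast_sum]
  refine Finset.sum_congr rfl fun n _ ↦ ?_
  have := hle n
  simp only [zpos]
  lia

lemma IsBeadMove.parts_succ (h : IsBeadMove A B m m') {n : ℕ} (hm : m ≤ n) (hm' : n < m') :
    A.parts (n + 1) = B.parts n + 1 := by
  have := h.between n hm hm'
  simp only [zpos] at this
  lia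

lemma IsBeadMove.parts_lt_parts_iff (h : IsBeadMove A B m m') (hlt : zpos B m' < zpos A m)
    {n : ℕ} : B.parts n < A.parts n ↔ m ≤ n ∧ n ≤ m' := by
  suffices zpos B n < zpos A n ↔ m ≤ n ∧ n ≤ m' by simpa [zpos] using this
  refine ⟨fun hn ↦ ⟨?_, ?_⟩, fun ⟨hm, hm'⟩ ↦ ?_⟩
  · by_contra! hnm
    exact hn.ne (h.above n hnm)
  · by_contra! hnm
    exact hn.ne (h.below n hnm)
  · rcases hm'.lt_or_eq with hm' | rfl
    · rw [h.between n hm hm']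
      exact zpos_strictAnti A n.lt_succ_self
    · rcases hm.lt_or_eq with hm | rfl
      · obtain ⟨n, rfl⟩ := Nat.exists_eq_succ_of_ne_zero (Nat.ne_zero_of_lt hm)
        rw [← h.between n (by lia) n.lt_succ_self]
        exact zpos_strictAnti B n.lt_succ_self
      · exact hlt

lemma IsBeadMove.partition_le (h : IsBeadMove A B m m') (hlt : zpos B m' < zpos A m) : B ≤ A := by
  intro n
  by_cases hn : m ≤ n ∧ n ≤ m'
  · exact ((h.parts_lt_parts_iff hlt).2 hn).le
  · have : zpos B n = zpos A n := by
      by_cases hm : n < m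
      · exact h.above n hm
      · exact h.below n (by lia)
    simp only [zpos] at this
    lia

lemma IsBeadMove.rowCount_skew (h : IsBeadMove A B m m') (hlt : zpos B m' < zpos A m) :
    rowCount (A.skew B) = m' - m + 1 := by
  have hrows : Prod.fst '' A.skew B = Finset.Icc m m' := by
    ext n
    simp only [Set.mem_image, mem_skew, Prod.exists, exists_and_right, exists_eq_right,
      Finset.coe_Icc, Set.mem_Icc, ← h.parts_lt_parts_iff hlt]
    exact ⟨fun ⟨j, hj⟩ ↦ hj.1.trans_lt hj.2, fun hn ↦ ⟨B.parts n, le_rfl, hn⟩⟩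
  have := h.le
  rw [rowCount, hrows, Set.ncard_coe_finset, Nat.card_Icc]
  lia

lemma IsBeadMove.noSquare_skew (h : IsBeadMove A B m m') (hlt : zpos B m' < zpos A m) :
    NoSquare (A.skew B) := by
  rintro ⟨i, j, h00, h10, -, h11⟩
  rw [mem_skew] at h00 h10 h11
  have hi := (h.parts_lt_parts_iff hlt).1 (h00.1.trans_lt h00.2)
  have hi' := (h.parts_lt_parts_iff hlt).1 (h10.1.trans_lt h10.2)
  have := h.parts_succ hi.1 (by lia)
  lia

lemma Adj.symm {c d : ℕ × ℕ} (h : Adj c d) : Adj d c := by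
  unfold Adj at *
  lia

lemma isConnectedSet_of_descent {S : Set (ℕ × ℕ)} (o : ℕ × ℕ) (f : ℕ × ℕ → ℕ)
    (h : ∀ c ∈ S, c = o ∨ ∃ d ∈ S, Adj c d ∧ f d < f c) : IsConnectedSet S := by
  have hsymm : Std.Symm fun x y ↦ x ∈ S ∧ y ∈ S ∧ Adj x y :=
    ⟨fun x y ⟨hx, hy, hxy⟩ ↦ ⟨hy, hx, hxy.symm⟩⟩
  have hpath (c) (hc : c ∈ S) :
      Relation.ReflTransGen (fun x y ↦ x ∈ S ∧ y ∈ S ∧ Adj x y) c o := by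
    induction hn : f c using Nat.strong_induction_on generalizing c with
    | _ n ih =>
      subst hn
      obtain rfl | ⟨d, hd, hcd, hlt⟩ := h c hc
      · exact .refl
      · exact .head ⟨hc, hd, hcd⟩ (ih _ hlt d hd rfl)
  exact fun c hc d hd ↦ (hpath c hc).trans (Relation.ReflTransGen.stdSymm.symm _ _ (hpath d hd))

-- Every cell reaches the lower left end of the hook by walking left, and down when it cannot.
lemma IsBeadMove.isConnectedSet_skew (h : IsBeadMove A B m m') (hlt : zpos B m' < zpos A m) :
    IsConnectedSet (A.skew B) := by
  refine isConnectedSet_of_descent (m', B.parts m') (fun c ↦ c.2 + (m' - c.1)) ?_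
  rintro ⟨n, j⟩ hc
  simp only [mem_skew, Prod.mk.injEq, Prod.exists, Adj] at hc ⊢
  obtain ⟨hm, hm'⟩ := (h.parts_lt_parts_iff hlt).1 (hc.1.trans_lt hc.2)
  by_cases hj : B.parts n < j
  · exact .inr ⟨n, j - 1, by lia, by lia, by lia⟩
  rcases hm'.lt_or_eq with hm' | rfl
  · have := h.parts_succ hm hm'
    have := B.antitone n.le_succ
    exact .inr ⟨n + 1, j, by lia, by lia, by lia⟩
  · exact .inl ⟨rfl, by lia⟩

lemma IsBeadMove.isRimHook (h : IsBeadMove A B m m') {t : ℕ} (ht : 0 < t)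
    (hjump : zpos A m - zpos B m' = t) : IsRimHook A B t := by
  have hlt : zpos B m' < zpos A m := by lia
  have hle := h.partition_le hlt
  refine ⟨hle, ⟨(m, B.parts m), ?_⟩, h.isConnectedSet_skew hlt, h.noSquare_skew hlt, ?_⟩
  · exact mem_skew.2 ⟨le_rfl, (h.parts_lt_parts_iff hlt).2 ⟨le_rfl, h.le⟩⟩
  · exact_mod_cast (h.ncard_skew hle).trans hjump

lemma exists_vertical_pair_of_path {S : Set (ℕ × ℕ)} {c d : ℕ × ℕ} {n : ℕ}
    (h : Relation.ReflTransGen (fun x y ↦ x ∈ S ∧ y ∈ S ∧ Adj x y) c d)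
    (hc : c.1 ≤ n) (hd : n < d.1) : ∃ j, (n, j) ∈ S ∧ (n + 1, j) ∈ S := by
  induction h with
  | refl => lia
  | @tail x y _ hxy ih =>
    obtain ⟨hx, hy, hadj⟩ := hxy
    by_cases hxn : n < x.1
    · exact ih hxn
    · obtain ⟨h1, h2, h3⟩ : x.1 = n ∧ y.1 = n + 1 ∧ y.2 = x.2 := by unfold Adj at hadj; lia
      exact ⟨x.2, h1 ▸ hx, h2 ▸ h3 ▸ hy⟩

-- Connectedness makes consecutive rows overlap; a missing `2 × 2` square allows only one column.
lemma parts_succ_eq_of_noSquare (hconn : IsConnectedSet (A.skew B)) (hsq : NoSquare (A.skew B))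
    (hm : B.parts m < A.parts m) (hm' : B.parts m' < A.parts m') {n : ℕ} (hmn : m ≤ n)
    (hnm' : n < m') : A.parts (n + 1) = B.parts n + 1 := by
  obtain ⟨j, hj, hj'⟩ := exists_vertical_pair_of_path
    (hconn (m, B.parts m) (mem_skew.2 ⟨le_rfl, hm⟩) (m', B.parts m') (mem_skew.2 ⟨le_rfl, hm'⟩))
    hmn hnm'
  simp only [mem_skew] at hj hj'
  have := A.antitone n.le_succ
  have := B.antitone n.le_succ
  by_contra hne
  refine hsq ⟨n, B.parts n, ?_, ?_, ?_, ?_⟩ <;> simp only [mem_skew] <;> lia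

lemma exists_first_last_row (hne : (A.skew B).Nonempty) : ∃ m m', B.parts m < A.parts m ∧
    B.parts m' < A.parts m' ∧ ∀ n, B.parts n < A.parts n → m ≤ n ∧ n ≤ m' := by
  classical
  obtain ⟨c, hc⟩ := hne
  have hex : ∃ n, B.parts n < A.parts n := ⟨c.1, (mem_skew.1 hc).1.trans_lt (mem_skew.1 hc).2⟩
  obtain ⟨M, hM⟩ := A.eventually_zero
  have hlt_M (n : ℕ) (hn : B.parts n < A.parts n) : n ≤ M := by
    by_contra! h
    have := hM n h.le
    lia
  exact ⟨Nat.find hex, Nat.findGreatest (fun n ↦ B.parts n < A.parts n) M, Nat.find_spec hex,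
    Nat.findGreatest_spec (P := fun n ↦ B.parts n < A.parts n) (hlt_M _ (Nat.find_spec hex))
      (Nat.find_spec hex),
    fun n hn ↦ ⟨Nat.find_min' hex hn, Nat.le_findGreatest (hlt_M n hn) hn⟩⟩

lemma IsRimHook.exists_isBeadMove {t : ℕ} (h : IsRimHook A B t) :
    ∃ m m', IsBeadMove A B m m' ∧ 0 < t ∧ zpos A m - zpos B m' = t := by
  obtain ⟨hle, hne, hconn, hsq, rfl⟩ := h
  obtain ⟨m, m', hm, hm', hrange⟩ := exists_first_last_row hne
  have heq (n : ℕ) (hn : ¬ (m ≤ n ∧ n ≤ m')) : zpos B n = zpos A n := by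
    have := hle n
    have := mt (hrange n) hn
    simp only [zpos]
    lia
  have hmove : IsBeadMove A B m m' :=
    { le := (hrange m hm).2
      above := fun n hn ↦ heq n (by lia)
      between := fun n hmn hnm' ↦ by
        have := parts_succ_eq_of_noSquare hconn hsq hm hm' hmn hnm'
        simp only [zpos]
        lia
      below := fun n hn ↦ heq n (by lia) }
  have hjump := hmove.ncard_skew hle
  refine ⟨m, m', hmove, ?_, hjump.symm⟩
  have hpos : 0 < ∑ n ∈ Finset.range (m' + 1), (zpos A n - zpos B n) :=
    Finset.sum_pos' (fun n _ ↦ by have := hle n; simp only [zpos]; lia)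
      ⟨m, by simpa using (hrange m hm).2.trans_lt m'.lt_succ_self, by simp only [zpos]; lia⟩
  rw [hmove.sum_zpos_sub m'.lt_succ_self] at hpos
  lia

theorem isRimHook_iff {t : ℕ} : IsRimHook A B t ↔
    ∃ m m', IsBeadMove A B m m' ∧ 0 < t ∧ zpos A m - zpos B m' = t :=
  ⟨IsRimHook.exists_isBeadMove, fun ⟨_, _, h, ht, hjump⟩ ↦ h.isRimHook ht hjump⟩

lemma IsBeadMove.start_unique {n n' : ℕ} (h : IsBeadMove A B m m') (h' : IsBeadMove A B n n')
    (hlt : zpos B m' < zpos A m) (hlt' : zpos B n' < zpos A n) : m = n := by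
  have key {i : ℕ} := (h.parts_lt_parts_iff hlt (n := i)).symm.trans (h'.parts_lt_parts_iff hlt')
  exact le_antisymm (key.2 ⟨le_rfl, h'.le⟩).1 (key.1 ⟨le_rfl, h.le⟩).1

lemma IsBeadMove.zpos_lt_iff (h : IsBeadMove A B m m') {n : ℕ} (hn : m < n) :
    zpos B m' < zpos A n ↔ n ≤ m' := by
  refine ⟨fun hlt ↦ ?_, fun hle ↦ ?_⟩
  · by_contra! hlt'
    rw [← h.below n hlt'] at hlt
    exact (zpos_strictAnti B hlt').not_gt hlt
  · obtain ⟨n, rfl⟩ := Nat.exists_eq_succ_of_ne_zero (Nat.ne_zero_of_lt hn)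
    rw [← h.between n (by lia) hle]
    exact zpos_strictAnti B hle

lemma IsBeadMove.target_unique {B' : Partition} {n' : ℕ} (h : IsBeadMove A B m m')
    (h' : IsBeadMove A B' m n') (hpos : zpos B m' = zpos B' n') : B = B' := by
  obtain rfl : m' = n' := by
    have key {i : ℕ} (hi : m < i) : i ≤ m' ↔ i ≤ n' := by
      rw [← h.zpos_lt_iff hi, hpos, h'.zpos_lt_iff hi]
    have := h.le
    have := h'.le
    by_contra hne
    rcases Nat.lt_or_gt_of_ne hne with hlt | hlt
    · have := key (by lia : m < n')
      lia
    · have := key (by lia : m < m')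
      lia
  refine zpos_injective (funext fun n ↦ ?_)
  rcases lt_trichotomy n m' with hn | rfl | hn
  · by_cases hm : n < m
    · rw [h.above n hm, h'.above n hm]
    · rw [h.between n (by lia) hn, h'.between n (by lia) hn]
  · exact hpos
  · rw [h.below n hn, h'.below n hn]

lemma exists_isBeadMove {N : ℕ} {x : ℤ} (hN : A.parts N = 0) (hm : m < N) (hNx : -(N : ℤ) ≤ x)
    (hxm : x < zpos A m) (hx : ¬ isZeroAt A x) :
    ∃ B m', IsBeadMove A B m m' ∧ zpos B m' = x := by
  let m' := Nat.findGreatest (fun n ↦ x < zpos A n) N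
  have hmm' : m ≤ m' := Nat.le_findGreatest hm.le hxm
  have hxm' : x < zpos A m' := Nat.findGreatest_spec (P := fun n ↦ x < zpos A n) hm.le hxm
  have hbelow (n : ℕ) (hn : m' < n) : zpos A n < x := by
    refine lt_of_le_of_ne ?_ fun h ↦ hx ⟨n, h⟩
    by_cases hnN : n ≤ N
    · exact not_lt.1 (Nat.findGreatest_is_greatest hn hnN)
    · rw [zpos_of_le hN (by lia)]
      lia
  have hm'N : m' < N := (neg_le_zpos_iff hN).1 (hNx.trans hxm'.le)
  let z (n : ℕ) : ℤ :=
    if n < m then zpos A n else if n < m' then zpos A (n + 1) else if n = m' then x else zpos A n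
  have hz : StrictAnti z := strictAnti_nat_of_succ_lt fun n ↦ by
    have := zpos_strictAnti A n.lt_succ_self
    have := zpos_strictAnti A (n + 1).lt_succ_self
    have := hbelow (n + 1)
    grind
  obtain ⟨B, hB⟩ := exists_zpos_eq hz (N := N) fun n hn ↦ by
    rw [← zpos_of_le hN hn]
    grind
  refine ⟨B, m', ⟨hmm', ?_, ?_, ?_⟩, ?_⟩ <;> grind

end BeadMoves

section AlternatingPolynomials

open MvPolynomial

variable {ι R : Type*} [Fintype ι] [DecidableEq ι] [CommRing R]

/-- A polynomial is alternating if permuting the variables multiplies it by the sign of the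
permutation. -/
def IsAlternating (f : MvPolynomial ι R) : Prop :=
  ∀ σ : Equiv.Perm ι, rename σ f = (Equiv.Perm.sign σ : ℤ) • f

lemma IsAlternating.mul_isSymmetric {f g : MvPolynomial ι R} (hf : IsAlternating f)
    (hg : g.IsSymmetric) : IsAlternating (f * g) := fun σ ↦ by
  rw [map_mul, hf, hg, smul_mul_assoc]

lemma IsAlternating.coeff_mapDomain {f : MvPolynomial ι R} (hf : IsAlternating f)
    (σ : Equiv.Perm ι) (g : ι →₀ ℕ) :
    coeff (g.mapDomain σ) f = (Equiv.Perm.sign σ : ℤ) • coeff g f := by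
  rw [← coeff_rename_mapDomain σ σ.injective f g, hf, coeff_smul, smul_smul,
    Int.units_coe_mul_self, one_smul]

lemma IsAlternating.coeff_eq_zero [IsAddTorsionFree R] {f : MvPolynomial ι R}
    (hf : IsAlternating f) {g : ι →₀ ℕ} {i j : ι} (hij : i ≠ j) (hg : g i = g j) :
    coeff g f = 0 := by
  have hswap : g.mapDomain (Equiv.swap i j) = g := by
    ext a
    rw [Finsupp.mapDomain_equiv_apply, Equiv.symm_swap, Equiv.swap_apply_def]
    split_ifs <;> simp [*]
  have h := hf.coeff_mapDomain (Equiv.swap i j) g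
  rw [hswap, Equiv.Perm.sign_swap hij, Units.val_neg, Units.val_one, neg_one_zsmul] at h
  exact self_eq_neg.1 h

variable (R) in
/-- The alternant `a_d = ∑_σ sign(σ) x^{σ d}` with exponent vector `d`. -/
noncomputable def alternant (d : ι →₀ ℕ) : MvPolynomial ι R :=
  ∑ σ : Equiv.Perm ι, (Equiv.Perm.sign σ : ℤ) • monomial (d.mapDomain σ) 1

lemma isAlternating_alternant (d : ι →₀ ℕ) : IsAlternating (alternant R d) := fun τ ↦ by
  rw [alternant, map_sum, Finset.smul_sum, ← Equiv.sum_comp (Equiv.mulLeft τ⁻¹)]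
  refine Finset.sum_congr rfl fun σ _ ↦ ?_
  rw [map_zsmul, rename_monomial, ← Finsupp.mapDomain_comp, smul_smul, Equiv.coe_mulLeft,
    ← Equiv.Perm.coe_mul, mul_inv_cancel_left, map_mul, Equiv.Perm.sign_inv, Units.val_mul]

lemma coeff_alternant_mul (d g : ι →₀ ℕ) (f : MvPolynomial ι R) :
    coeff g (alternant R d * f) = ∑ σ : Equiv.Perm ι, (Equiv.Perm.sign σ : ℤ) •
      if d.mapDomain σ ≤ g then coeff (g - d.mapDomain σ) f else 0 := by
  simp only [alternant, Finset.sum_mul, coeff_sum, smul_mul_assoc, coeff_smul,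
    coeff_monomial_mul', one_mul]

lemma coeff_alternant_of_strictAnti {N : ℕ} {d g : Fin N →₀ ℕ} (hd : StrictAnti d)
    (hg : StrictAnti g) : coeff g (alternant R d) = if d = g then 1 else 0 := by
  have hperm (σ : Equiv.Perm (Fin N)) (hσ : d.mapDomain σ = g) : σ = 1 := by
    have hcomp (i : Fin N) : g (σ i) = d i := by
      rw [← hσ, Finsupp.mapDomain_equiv_apply, Equiv.symm_apply_apply]
    have hmono : StrictMono σ := fun i j hij ↦ hg.lt_iff_gt.1 (by simpa only [hcomp] using hd hij)
    exact DFunLike.coe_injective ((hmono.range_inj strictMono_id).1 (by simp))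
  rw [alternant, coeff_sum, Finset.sum_eq_single 1]
  · simp [coeff_monomial]
  · intro σ _ hσ
    rw [coeff_smul, coeff_monomial, if_neg (mt (hperm σ) hσ), smul_zero]
  · simp

omit [DecidableEq ι] in
lemma coeff_mul_psum (f : MvPolynomial ι R) (t : ℕ) (g : ι →₀ ℕ) :
    coeff g (f * psum ι R t) =
      ∑ i, if t ≤ g i then coeff (g - Finsupp.single i t) f else 0 := by
  simp only [psum, Finset.mul_sum, coeff_sum, X_pow_eq_monomial, coeff_mul_monomial', mul_one,
    Finsupp.single_le_iff]

end AlternatingPolynomials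

section BetaNumbers

/-- The beta-numbers of `P` in `N` variables: the positions of the zeros of `s(P)` in the rows
below `N`, shifted by `N` so as to be nonnegative. -/
noncomputable def betaNumbers (N : ℕ) (P : Partition) : Fin N →₀ ℕ :=
  Finsupp.equivFunOnFinite.symm fun i ↦ P.parts i + i.rev

variable {N : ℕ} {P B : Partition}

lemma betaNumbers_cast (i : Fin N) : (betaNumbers N P i : ℤ) = zpos P i + N := by
  simp only [betaNumbers, Finsupp.coe_equivFunOnFinite_symm, Fin.val_rev, zpos]
  have := i.isLt
  omega

lemma strictAnti_betaNumbers : StrictAnti (betaNumbers N P) := fun i j hij ↦ by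
  have := zpos_strictAnti P hij
  zify
  simp only [betaNumbers_cast]
  lia

lemma betaNumbers_inj {Q : Partition} (hP : P.parts N = 0) (hQ : Q.parts N = 0) :
    betaNumbers N P = betaNumbers N Q ↔ P = Q := by
  refine ⟨fun h ↦ zpos_injective (funext fun n ↦ ?_), fun h ↦ h ▸ rfl⟩
  by_cases hn : n < N
  · have := congrArg (Nat.cast (R := ℤ)) (DFunLike.congr_fun h ⟨n, hn⟩)
    simpa only [betaNumbers_cast, add_left_inj] using this
  · rw [zpos_of_le hP (not_lt.1 hn), zpos_of_le hQ (not_lt.1 hn)]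

lemma IsBeadMove.betaNumbers_sub_single {m m' : Fin N} {t : ℕ} (h : IsBeadMove P B m m')
    (hjump : zpos P m - zpos B m' = t) :
    betaNumbers N P - Finsupp.single m t = (betaNumbers N B).mapDomain (m.cycleIcc m') := by
  have : NeZero N := ⟨m.pos.ne'⟩
  suffices hval : ∀ i, (betaNumbers N P - Finsupp.single m t) (m.cycleIcc m' i) =
      betaNumbers N B i by
    ext i
    rw [Finsupp.mapDomain_equiv_apply, ← hval, Equiv.apply_symm_apply]
  intro i
  have hne {a : Fin N} (ha : a ≠ m) :
      (betaNumbers N P - Finsupp.single m t) a = betaNumbers N P a := by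
    rw [Finsupp.tsub_apply, Finsupp.single_eq_of_ne ha, tsub_zero]
  rcases lt_or_ge i m with him | hmi
  · rw [Fin.cycleIcc_of_lt him, hne him.ne]
    zify
    rw [betaNumbers_cast, betaNumbers_cast, h.above i him]
  rcases lt_trichotomy i m' with him' | rfl | him'
  · have hi : ((i + 1 : Fin N) : ℕ) = i + 1 := Fin.val_add_one_of_lt' (by lia)
    rw [Fin.cycleIcc_of_ge_of_lt hmi him', hne (Fin.ne_of_val_ne (by lia))]
    zify
    rw [betaNumbers_cast, betaNumbers_cast, h.between i hmi him', hi]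
  · have := betaNumbers_cast (P := P) m
    have := betaNumbers_cast (P := B) i
    rw [Fin.cycleIcc_of_last h.le, Finsupp.tsub_apply, Finsupp.single_eq_same]
    lia
  · rw [Fin.cycleIcc_of_gt him', hne (Fin.ne_of_val_ne (h.le.trans_lt him').ne')]
    zify
    rw [betaNumbers_cast, betaNumbers_cast, h.below i him']

end BetaNumbers

section MurnaghanNakayama

open MvPolynomial

variable {N t : ℕ} {P B : Partition}

/-- The partitions obtained from `P` by removing a rim hook of length `t` whose first row is row
`i`, that is, by moving the zero of row `i` to the left by `t` places. -/
def hookRemovalsFrom (P : Partition) (t i : ℕ) : Set Partition :=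
  {B | ∃ i', IsBeadMove P B i i' ∧ zpos P i - zpos B i' = t}

lemma hookRemovalsFrom_subsingleton {i : ℕ} : (hookRemovalsFrom P t i).Subsingleton := by
  rintro B ⟨m, hB, hm⟩ B' ⟨m', hB', hm'⟩
  exact hB.target_unique hB' (by lia)

lemma IsBeadMove.lt_of_parts_eq_zero {m m' : ℕ} (h : IsBeadMove P B m m')
    (hlt : zpos B m' < zpos P m) (hN : P.parts N = 0) : m' < N := by
  have := (h.parts_lt_parts_iff hlt).2 ⟨h.le, le_rfl⟩
  by_contra! hm'
  have := P.antitone hm'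
  lia

lemma parts_eq_zero_of_le (h : B ≤ P) (hN : P.parts N = 0) : B.parts N = 0 :=
  Nat.le_zero.1 (hN ▸ h N)

lemma setOf_isRimHook_eq_iUnion (hN : P.parts N = 0) (ht : 0 < t) :
    {B | IsRimHook P B t} = ⋃ i : Fin N, hookRemovalsFrom P t i := by
  ext B
  simp only [Set.mem_ofPred_eq, isRimHook_iff, Set.mem_iUnion, hookRemovalsFrom]
  constructor
  · rintro ⟨m, m', h, -, hjump⟩
    exact ⟨⟨m, h.le.trans_lt (h.lt_of_parts_eq_zero (by lia) hN)⟩, m', h, hjump⟩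
  · rintro ⟨i, i', h, hjump⟩
    exact ⟨i, i', h, ht, hjump⟩

lemma finite_setOf_isRimHook : {B | IsRimHook P B t}.Finite := by
  rcases t.eq_zero_or_pos with rfl | ht
  · simp [isRimHook_iff]
  · rw [setOf_isRimHook_eq_iUnion (parts_length P) ht]
    exact Set.finite_iUnion fun i ↦ hookRemovalsFrom_subsingleton.finite

lemma pairwise_disjoint_hookRemovalsFrom (ht : 0 < t) :
    Pairwise (Function.onFun Disjoint fun i : Fin N ↦ hookRemovalsFrom P t i) := by
  refine fun i j hij ↦ Set.disjoint_left.2 ?_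
  rintro B ⟨i', hi, hti⟩ ⟨j', hj, htj⟩
  exact hij (Fin.ext (hi.start_unique hj (by lia) (by lia)))

variable {R : Type*} [CommRing R]

lemma IsBeadMove.coeff_sub_single {m m' : Fin N} (h : IsBeadMove P B m m') (ht : 0 < t)
    (hjump : zpos P m - zpos B m' = t) {f : MvPolynomial (Fin N) R} (hf : IsAlternating f) :
    coeff (betaNumbers N P - Finsupp.single m t) f =
      (-1) ^ (rowCount (P.skew B) - 1) * coeff (betaNumbers N B) f := by
  rw [h.betaNumbers_sub_single hjump, hf.coeff_mapDomain,
    Fin.sign_cycleIcc_of_le (Fin.le_def.2 h.le), h.rowCount_skew (by lia), Nat.add_sub_cancel]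
  simp [zsmul_eq_mul]

-- If the zero cannot be moved because the new position is taken, the exponent vector has a
-- repeated entry.
lemma coeff_sub_single_eq_zero [IsAddTorsionFree R] (hN : P.parts N = 0) (ht : 0 < t) {i : Fin N}
    (hempty : hookRemovalsFrom P t i = ∅) (hi : t ≤ betaNumbers N P i)
    {f : MvPolynomial (Fin N) R} (hf : IsAlternating f) :
    coeff (betaNumbers N P - Finsupp.single i t) f = 0 := by
  have hbeta := betaNumbers_cast (P := P) i
  obtain ⟨n, hn⟩ : isZeroAt P (zpos P i - t) := by
    by_contra hzero
    obtain ⟨B, m', hB, hm'⟩ := exists_isBeadMove hN i.isLt (by lia) (by lia) hzero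
    exact hempty.subset (⟨m', hB, by lia⟩ : B ∈ hookRemovalsFrom P t i)
  lift n to Fin N using (neg_le_zpos_iff hN).1 (by lia)
  have hni : n ≠ i := by
    rintro rfl
    lia
  refine hf.coeff_eq_zero hni ?_
  have := betaNumbers_cast (P := P) n
  rw [Finsupp.tsub_apply, Finsupp.tsub_apply, Finsupp.single_eq_same, Finsupp.single_eq_of_ne hni]
  lia

lemma finsum_hookRemovalsFrom [IsAddTorsionFree R] (hN : P.parts N = 0) (ht : 0 < t) (i : Fin N)
    {f : MvPolynomial (Fin N) R} (hf : IsAlternating f) :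
    ∑ᶠ B ∈ hookRemovalsFrom P t i,
        (-1) ^ (rowCount (P.skew B) - 1) * coeff (betaNumbers N B) f =
      if t ≤ betaNumbers N P i then coeff (betaNumbers N P - Finsupp.single i t) f else 0 := by
  rcases (hookRemovalsFrom P t i).eq_empty_or_nonempty with hempty | ⟨B, hB⟩
  · rw [hempty, finsum_mem_empty]
    split_ifs with hi
    · exact (coeff_sub_single_eq_zero hN ht hempty hi hf).symm
    · rfl
  · rw [hookRemovalsFrom_subsingleton.eq_singleton_of_mem hB, finsum_mem_singleton]
    obtain ⟨m', hmove, hjump⟩ := hB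
    lift m' to Fin N using hmove.lt_of_parts_eq_zero (by lia) hN
    have := betaNumbers_cast (P := P) i
    have := betaNumbers_cast (P := B) m'
    rw [if_pos (by lia), hmove.coeff_sub_single ht hjump hf]

theorem coeff_betaNumbers_mul_psum [IsAddTorsionFree R] (hN : P.parts N = 0) (ht : 0 < t)
    {f : MvPolynomial (Fin N) R} (hf : IsAlternating f) :
    coeff (betaNumbers N P) (f * psum (Fin N) R t) =
      ∑ᶠ B ∈ {B | IsRimHook P B t},
        (-1) ^ (rowCount (P.skew B) - 1) * coeff (betaNumbers N B) f := by
  rw [setOf_isRimHook_eq_iUnion hN ht, finsum_mem_iUnion (pairwise_disjoint_hookRemovalsFrom ht)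
    fun i ↦ hookRemovalsFrom_subsingleton.finite, finsum_eq_sum_of_fintype, coeff_mul_psum]
  exact Finset.sum_congr rfl fun i _ ↦ (finsum_hookRemovalsFrom hN ht i hf).symm

/-- The chains `∅ = c 0, …, c n = P` in which `c (j + 1)` arises from `c j` by adding a rim hook
of length `m j`. -/
def hookChains {n : ℕ} (m : Fin n → ℕ) (P : Partition) : Set (Fin (n + 1) → Partition) :=
  {c | c 0 = .empty ∧ c (Fin.last n) = P ∧ ∀ j, IsRimHook (c j.succ) (c j.castSucc) (m j)}

/-- The total height of a chain of partitions; each hook contributes its number of rows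
minus one. -/
noncomputable def chainHeight {n : ℕ} (c : Fin (n + 1) → Partition) : ℕ :=
  ∑ j : Fin n, (rowCount ((c j.succ).skew (c j.castSucc)) - 1)

lemma hookChains_zero (m : Fin 0 → ℕ) :
    hookChains m P = {c | P = .empty ∧ c = fun _ ↦ .empty} := by
  ext c
  obtain ⟨B, rfl⟩ : ∃ B, c = fun _ ↦ B :=
    ⟨c 0, funext fun j ↦ congrArg c (Subsingleton.elim (α := Fin 1) j 0)⟩
  simp only [hookChains, Set.mem_ofPred_eq, IsEmpty.forall_iff, and_true]
  exact ⟨fun ⟨h0, hP⟩ ↦ ⟨hP ▸ h0, h0 ▸ rfl⟩, fun ⟨hP, h⟩ ↦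
    have h0 : B = .empty := congrFun h 0
    ⟨h0, h0.trans hP.symm⟩⟩

lemma hookChains_succ {n : ℕ} (m : Fin (n + 1) → ℕ) :
    hookChains m P = ⋃ B ∈ {B | IsRimHook P B (m (Fin.last n))},
      (fun c ↦ Fin.snoc (α := fun _ ↦ Partition) c P) '' hookChains (Fin.init m) B := by
  ext c
  simp only [Set.mem_iUnion, Set.mem_image, Set.mem_ofPred_eq, exists_prop]
  constructor
  · rintro ⟨h0, rfl, hstep⟩
    refine ⟨c (Fin.last n).castSucc, hstep (Fin.last n), Fin.init c, ⟨h0, rfl, fun j ↦ ?_⟩,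
      Fin.snoc_init_self c⟩
    exact hstep j.castSucc
  · rintro ⟨B, hB, c, ⟨h0, rfl, hstep⟩, rfl⟩
    refine ⟨by simpa using h0, Fin.snoc_last _ _, fun j ↦ ?_⟩
    induction j using Fin.lastCases with
    | last => simpa using hB
    | cast j => simpa [← Fin.castSucc_succ, Fin.snoc_castSucc, Fin.init] using hstep j

lemma finite_hookChains {n : ℕ} (m : Fin n → ℕ) (P : Partition) : (hookChains m P).Finite := by
  induction n generalizing P with
  | zero =>
    rw [hookChains_zero]
    exact (Set.finite_singleton fun _ ↦ Partition.empty).subset fun c hc ↦ hc.2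
  | succ n ih =>
    rw [hookChains_succ]
    exact finite_setOf_isRimHook.biUnion fun B _ ↦ (ih _ B).image _

lemma chainHeight_snoc {n : ℕ} (c : Fin (n + 1) → Partition) :
    chainHeight (Fin.snoc (α := fun _ ↦ Partition) c P) =
      chainHeight c + (rowCount (P.skew (c (Fin.last n))) - 1) := by
  simp [chainHeight, Fin.sum_univ_castSucc, ← Fin.castSucc_succ]

lemma finsum_hookChains_succ {n : ℕ} (m : Fin (n + 1) → ℕ) :
    ∑ᶠ c ∈ hookChains m P, (-1 : R) ^ chainHeight c =
      ∑ᶠ B ∈ {B | IsRimHook P B (m (Fin.last n))}, (-1) ^ (rowCount (P.skew B) - 1) *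
        ∑ᶠ c ∈ hookChains (Fin.init m) B, (-1 : R) ^ chainHeight c := by
  have hsnoc : Function.Injective fun c : Fin (n + 1) → Partition ↦
      Fin.snoc (α := fun _ ↦ Partition) c P := fun _ _ h ↦ (Fin.snoc_inj.1 h).1
  rw [hookChains_succ, finsum_mem_biUnion _ finite_setOf_isRimHook
    fun B _ ↦ (finite_hookChains _ B).image _]
  · refine finsum_mem_congr rfl fun B _ ↦ ?_
    rw [finsum_mem_image hsnoc.injOn, mul_finsum_mem' _ _ (finite_hookChains _ B)]
    refine finsum_mem_congr rfl fun c hc ↦ ?_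
    rw [chainHeight_snoc, hc.2.1, pow_add, mul_comm]
  · intro B _ B' _ hBB'
    refine Set.disjoint_left.2 ?_
    rintro _ ⟨c, hc, rfl⟩ ⟨c', hc', h⟩
    obtain rfl := hsnoc h
    exact hBB' (hc.2.1.symm.trans hc'.2.1)

theorem finsum_hookChains_eq_coeff [IsAddTorsionFree R] {n : ℕ} {m : Fin n → ℕ}
    (hm : ∀ j, 0 < m j) (hN : P.parts N = 0) :
    ∑ᶠ c ∈ hookChains m P, (-1 : R) ^ chainHeight c =
      coeff (betaNumbers N P)
        (alternant R (betaNumbers N .empty) * ∏ j, psum (Fin N) R (m j)) := by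
  classical
  induction n generalizing P with
  | zero =>
    rw [Finset.univ_eq_empty, Finset.prod_empty, mul_one, coeff_alternant_of_strictAnti
      strictAnti_betaNumbers strictAnti_betaNumbers, hookChains_zero]
    by_cases hP : P = .empty
    · simp [hP, chainHeight]
    · simp [hP, (betaNumbers_inj rfl hN).not.2 (Ne.symm hP)]
  | succ n ih =>
    have halt : IsAlternating (alternant R (betaNumbers N .empty) *
        ∏ j : Fin n, psum (Fin N) R (m j.castSucc)) :=
      (isAlternating_alternant _).mul_isSymmetric
        (Subalgebra.prod_mem (symmetricSubalgebra _ R) fun j _ ↦ psum_isSymmetric _ R _)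
    rw [Fin.prod_univ_castSucc, ← mul_assoc, coeff_betaNumbers_mul_psum hN (hm _) halt,
      finsum_hookChains_succ]
    refine finsum_mem_congr rfl fun B hB ↦ ?_
    rw [ih (m := Fin.init m) (fun j ↦ hm j.castSucc) (parts_eq_zero_of_le hB.1 hN)]
    rfl

lemma isStep_iff_isRimHook {A : Partition} (ht : 0 < t) : IsStep A B t ↔ IsRimHook A B t := by
  simp [IsStep, ht, ht.ne']

/-- A rim hook tableau without empty hooks is a chain of partitions. -/
def rhtEquivHookChains {l : List ℕ} (hl : ∀ j : Fin l.length, 0 < l.get j) (P : Partition) :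
    RHT P l ≃ hookChains l.get P where
  toFun T := ⟨T.chain, T.chain_zero, T.chain_last, fun j ↦
    (isStep_iff_isRimHook (hl j)).1 (T.step j)⟩
  invFun c := ⟨c.1, c.2.1, c.2.2.1, fun j ↦ (isStep_iff_isRimHook (hl j)).2 (c.2.2.2 j)⟩

lemma chiAux_eq_finsum_hookChains {l : List ℕ} (hl : ∀ j : Fin l.length, 0 < l.get j)
    (P : Partition) : (chiAux P l : R) = ∑ᶠ c ∈ hookChains l.get P, (-1 : R) ^ chainHeight c := by
  have := (finite_hookChains l.get P).to_subtype
  have := Finite.of_equiv _ (rhtEquivHookChains hl P).symm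
  have hcast := (Int.castAddHom R).map_finsum (f := fun T : RHT P l ↦ (-1) ^ T.height)
    (Set.toFinite _)
  simp only [Int.coe_castAddHom] at hcast
  rw [chiAux, hcast, ← finsum_set_coe_eq_finsum_mem]
  refine finsum_eq_of_bijective _ (rhtEquivHookChains hl P).bijective fun T ↦ ?_
  simp [RHT.height, chainHeight, rhtEquivHookChains]

theorem chi_eq_coeff [IsAddTorsionFree R] {μ : Multiset ℕ} (hμ : ∀ x ∈ μ, 0 < x)
    (hN : P.parts N = 0) :
    (chi P μ : R) = coeff (betaNumbers N P)
      (alternant R (betaNumbers N .empty) * (μ.map (psum (Fin N) R)).prod) := by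
  have hlist : (typeList μ : Multiset ℕ) = μ := by
    rw [typeList, Multiset.coe_reverse, Multiset.sort_eq]
  have hpos (j : Fin (typeList μ).length) : 0 < (typeList μ).get j := by
    have hmem := List.get_mem (typeList μ) j
    rw [← Multiset.mem_coe, hlist] at hmem
    exact hμ _ hmem
  rw [chi, chiAux_eq_finsum_hookChains hpos, finsum_hookChains_eq_coeff hpos hN]
  conv_rhs => rw [← hlist, Multiset.map_coe, Multiset.prod_coe, ← Fin.prod_univ_fun_getElem]
  rfl

end MurnaghanNakayama

section CycleIndex

open MvPolynomial

lemma zpart_cons (t : ℕ) (μ : Multiset ℕ) :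
    zpart (t ::ₘ μ) = t * (μ.count t + 1) * zpart μ := by
  have hprod (ν : Multiset ℕ) (hν : ν.toFinset ⊆ insert t μ.toFinset) :
      ∏ j ∈ ν.toFinset, (ν.count j).factorial =
        ∏ j ∈ insert t μ.toFinset, (ν.count j).factorial :=
    Finset.prod_subset hν fun j _ hj ↦ by
      rw [Multiset.count_eq_zero_of_notMem (by simpa using hj), Nat.factorial_zero]
  have hcount : ∀ j ∈ (insert t μ.toFinset).erase t,
      ((t ::ₘ μ).count j).factorial = (μ.count j).factorial := fun j hj ↦ by
    rw [Multiset.count_cons_of_ne (Finset.ne_of_mem_erase hj)]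
  rw [zpart, zpart, hprod (t ::ₘ μ) (by simp), hprod μ (by simp),
    ← Finset.mul_prod_erase _ _ (Finset.mem_insert_self t _),
    ← Finset.mul_prod_erase _ _ (Finset.mem_insert_self t _), Finset.prod_congr rfl hcount,
    Multiset.count_cons_self, Multiset.prod_cons, Nat.factorial_succ]
  ring

lemma zpart_ne_zero {μ : Multiset ℕ} (h : ∀ x ∈ μ, 0 < x) : zpart μ ≠ 0 :=
  mul_ne_zero (Multiset.prod_ne_zero fun h0 ↦ (h 0 h0).ne rfl)
    (Finset.prod_ne_zero_iff.2 fun _ _ ↦ Nat.factorial_ne_zero _)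

lemma count_mul_div_zpart {μ : Multiset ℕ} (h : ∀ x ∈ μ, 0 < x) {t : ℕ} (ht : t ∈ μ) :
    (μ.count t * t : ℚ) * (1 / zpart μ) = 1 / zpart (μ.erase t) := by
  obtain ⟨ν, rfl⟩ := Multiset.exists_cons_of_mem ht
  have hν : (zpart ν : ℚ) ≠ 0 := by
    exact_mod_cast zpart_ne_zero fun x hx ↦ h x (Multiset.mem_cons_of_mem hx)
  have ht0 : (t : ℚ) ≠ 0 := by exact_mod_cast (h t ht).ne'
  rw [Multiset.erase_cons_head, zpart_cons, Multiset.count_cons_self]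
  push_cast
  field_simp

/-- The partitions of `p`, as a finite set of multisets. -/
def partitionsOf (p : ℕ) : Finset (Multiset ℕ) :=
  Finset.univ.map ⟨Nat.Partition.parts (n := p), fun _ _ ↦ Nat.Partition.ext⟩

lemma mem_partitionsOf {p : ℕ} {μ : Multiset ℕ} :
    μ ∈ partitionsOf p ↔ (∀ x ∈ μ, 0 < x) ∧ μ.sum = p := by
  simp only [partitionsOf, Finset.mem_map, Finset.mem_univ, true_and]
  constructor
  · rintro ⟨ν, rfl⟩
    exact ⟨fun x hx ↦ ν.parts_pos hx, ν.parts_sum⟩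
  · rintro ⟨hpos, hsum⟩
    exact ⟨⟨μ, fun {x} hx ↦ hpos x hx, hsum⟩, rfl⟩

variable {A : Type*} [CommRing A] [Algebra ℚ A]

/-- The cycle index of the symmetric group on `p` letters, with `f t` substituted for the variable
attached to the `t`-cycles. -/
noncomputable def cycleIndex (f : ℕ → A) (p : ℕ) : A :=
  ∑ μ ∈ partitionsOf p, (1 / (zpart μ : ℚ)) • (μ.map f).prod

lemma cycleIndex_eq_sum_partition (f : ℕ → A) (p : ℕ) :
    cycleIndex f p =
      ∑ μ : Nat.Partition p, (1 / (zpart μ.parts : ℚ)) • (μ.parts.map f).prod :=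
  Finset.sum_map _ _ _

lemma cycleIndex_zero (f : ℕ → A) : cycleIndex f 0 = 1 := by
  simp [cycleIndex_eq_sum_partition, zpart]

lemma map_cycleIndex {B F : Type*} [CommRing B] [Algebra ℚ B] [FunLike F A B] [RingHomClass F A B]
    (φ : F) (f : ℕ → A) (p : ℕ) : φ (cycleIndex f p) = cycleIndex (φ ∘ f) p := by
  simp [cycleIndex, map_rat_smul, map_multiset_prod]

-- Remove one part `t` from each partition; the factor `p` counts the parts with weight `t`.
theorem nsmul_cycleIndex (f : ℕ → A) (p : ℕ) :
    p • cycleIndex f p = ∑ t ∈ Finset.Icc 1 p, cycleIndex f (p - t) * f t := by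
  have hterm : ∀ μ ∈ partitionsOf p, p • (1 / (zpart μ : ℚ)) • (μ.map f).prod =
      ∑ t ∈ μ.toFinset, (1 / (zpart (μ.erase t) : ℚ)) • ((μ.erase t).map f).prod * f t := by
    intro μ hμ
    obtain ⟨hpos, hsum⟩ := mem_partitionsOf.1 hμ
    have hp : (p : ℚ) = ∑ t ∈ μ.toFinset, (μ.count t * t : ℚ) := by
      rw [← hsum, Finset.sum_multiset_count]
      simp
    rw [← Nat.cast_smul_eq_nsmul ℚ, smul_smul, hp, Finset.sum_mul, Finset.sum_smul]
    refine Finset.sum_congr rfl fun t ht ↦ ?_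
    rw [Multiset.mem_toFinset] at ht
    rw [count_mul_div_zpart hpos ht, smul_mul_assoc, mul_comm, Multiset.prod_map_erase ht]
  simp only [cycleIndex, Finset.smul_sum, Finset.sum_mul]
  rw [Finset.sum_congr rfl hterm, Finset.sum_sigma', Finset.sum_sigma']
  refine Finset.sum_bij' (fun x _ ↦ ⟨x.2, x.1.erase x.2⟩) (fun y _ ↦ ⟨y.1 ::ₘ y.2, y.1⟩)
    ?_ ?_ ?_ ?_ ?_
  · rintro ⟨μ, t⟩ h
    simp only [Finset.mem_sigma, mem_partitionsOf, Multiset.mem_toFinset, Finset.mem_Icc] at h ⊢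
    obtain ⟨⟨hpos, hsum⟩, ht⟩ := h
    have := Multiset.sum_erase ht
    exact ⟨⟨hpos t ht, by lia⟩, fun x hx ↦ hpos x (Multiset.mem_of_mem_erase hx), by lia⟩
  · rintro ⟨t, μ⟩ h
    simp only [Finset.mem_sigma, mem_partitionsOf, Multiset.mem_toFinset, Finset.mem_Icc] at h ⊢
    obtain ⟨⟨ht, htp⟩, hpos, hsum⟩ := h
    refine ⟨⟨fun x hx ↦ ?_, by rw [Multiset.sum_cons]; lia⟩, Multiset.mem_cons_self t μ⟩
    rcases Multiset.mem_cons.1 hx with rfl | hx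
    exacts [ht, hpos x hx]
  · rintro ⟨μ, t⟩ h
    simp only [Finset.mem_sigma, Multiset.mem_toFinset] at h
    simp [Multiset.cons_erase h.2]
  · rintro ⟨t, μ⟩ -
    simp
  · rintro ⟨μ, t⟩ -
    rfl

variable {σ R : Type*} [Fintype σ] [CommRing R]

lemma expand_psum (k t : ℕ) : expand k (psum σ R t) = psum σ R (k * t) := by
  simp [psum, pow_mul]

variable [DecidableEq σ]

lemma coeff_hsymm (p : ℕ) (g : σ →₀ ℕ) :
    coeff g (hsymm σ R p) = if g.degree = p then 1 else 0 := by
  have hmon (s : Sym σ p) : (s.1.map X).prod = monomial s.1.toFinsupp (1 : R) := by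
    induction s.1 using Multiset.induction with
    | empty => simp
    | cons i s ih =>
      rw [Multiset.map_cons, Multiset.prod_cons, ih, ← Multiset.singleton_add, map_add,
        Multiset.toFinsupp_singleton, X, monomial_mul, one_mul]
  have hcard : Multiset.card (Finsupp.toMultiset g) = g.degree := by
    rw [Finsupp.card_toMultiset, Finsupp.degree_eq_sum]
    exact Finsupp.sum_fintype _ _ fun _ ↦ rfl
  rw [hsymm, coeff_sum]
  split_ifs with hg
  · rw [Fintype.sum_eq_single (Sym.mk _ (hcard.trans hg)) fun s hs ↦ ?_, hmon, coeff_monomial]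
    · exact if_pos (Finsupp.toMultiset_toFinsupp g)
    · rw [hmon, coeff_monomial, if_neg]
      exact fun h ↦ hs (Sym.ext (Multiset.toFinsupp_eq_iff.1 h))
  · refine Finset.sum_eq_zero fun s _ ↦ ?_
    rw [hmon, coeff_monomial, if_neg]
    rintro rfl
    rw [Multiset.toFinsupp_toMultiset] at hcard
    exact hg (hcard.symm.trans s.2)

theorem nsmul_hsymm (p : ℕ) :
    p • hsymm σ R p = ∑ t ∈ Finset.Icc 1 p, hsymm σ R (p - t) * psum σ R t := by
  ext g
  simp only [coeff_smul, coeff_sum, coeff_mul_psum, coeff_hsymm]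
  have hdeg {t : ℕ} (ht : t ∈ Finset.Icc 1 p) (i : σ) (hi : t ≤ g i) :
      (g - Finsupp.single i t).degree = p - t ↔ g.degree = p := by
    have := congrArg Finsupp.degree (tsub_add_cancel_of_le (Finsupp.single_le_iff.2 hi))
    rw [map_add, Finsupp.degree_single] at this
    have := Finset.mem_Icc.1 ht
    lia
  have hite : ∀ t ∈ Finset.Icc 1 p, (∑ i, if t ≤ g i then
      if (g - Finsupp.single i t).degree = p - t then (1 : R) else 0 else 0) =
      ∑ i, if g.degree = p ∧ t ≤ g i then 1 else 0 := by
    refine fun t ht ↦ Finset.sum_congr rfl fun i _ ↦ ?_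
    rw [← ite_and]
    exact if_congr (by rw [and_comm, and_congr_left (hdeg ht i)]) rfl rfl
  rw [Finset.sum_congr rfl hite, Finset.sum_comm]
  by_cases hg : g.degree = p
  · have hIcc (i : σ) : {t ∈ Finset.Icc 1 p | t ≤ g i} = Finset.Icc 1 (g i) := by
      have := Finsupp.le_degree i g
      ext t
      simp only [Finset.mem_filter, Finset.mem_Icc]
      lia
    simp only [hg, true_and, if_true, Finset.sum_boole, hIcc, Nat.card_Icc, Nat.add_sub_cancel]
    rw [← hg, Finsupp.degree_eq_sum]
    simp
  · simp [hg]

theorem hsymm_eq_cycleIndex [Algebra ℚ R] (p : ℕ) :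
    hsymm σ R p = cycleIndex (psum σ R) p := by
  induction p using Nat.strong_induction_on with
  | _ p ih =>
    rcases p.eq_zero_or_pos with rfl | hp
    · rw [hsymm_zero, cycleIndex_zero]
    · have : IsAddTorsionFree (MvPolynomial σ R) := .of_module_rat _
      refine nsmul_right_injective hp.ne' ?_
      simp only [nsmul_hsymm, nsmul_cycleIndex]
      refine Finset.sum_congr rfl fun t ht ↦ ?_
      rw [ih (p - t) (by have := Finset.mem_Icc.1 ht; lia)]

omit [DecidableEq σ] in
theorem coeff_cycleIndex_psum_mul [Algebra ℚ R] {k : ℕ} (hk : 0 < k) (p : ℕ) (g : σ →₀ ℕ) :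
    coeff g (cycleIndex (fun t ↦ psum σ R (k * t)) p) =
      if (∀ i, k ∣ g i) ∧ g.degree = k * p then 1 else 0 := by
  classical
  have hexpand : cycleIndex (fun t ↦ psum σ R (k * t)) p = expand k (hsymm σ R p) := by
    rw [hsymm_eq_cycleIndex, map_cycleIndex]
    exact congrArg (cycleIndex · p) (funext fun t ↦ (expand_psum k t).symm)
  rw [hexpand]
  by_cases hdvd : ∀ i, k ∣ g i
  · choose d hd using hdvd
    obtain rfl : g = k • Finsupp.equivFunOnFinite.symm d := Finsupp.ext hd
    rw [coeff_expand_smul k hk.ne', coeff_hsymm]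
    simp [hk.ne']
  · obtain ⟨i, hi⟩ := not_forall.1 hdvd
    rw [coeff_expand_of_not_dvd _ hi, if_neg fun h ↦ hdvd h.1]

end CycleIndex

section SlideMatrix

open MvPolynomial

/-- A zero at position `x` can be brought to position `y` by moving it to the left, `k` places at a
time. -/
def SlidesTo (k : ℕ) (x y : ℤ) : Prop := y ≤ x ∧ x ≡ y [ZMOD k]

instance (k : ℕ) (x y : ℤ) : Decidable (SlidesTo k x y) := inferInstanceAs (Decidable (_ ∧ _))

/-- The matrix recording which of the first `N` zeros of `s(P)` slide to which of the first `N`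
zeros of `s(∅)`. -/
def slideMatrix (k N : ℕ) (P : Partition) : Matrix (Fin N) (Fin N) ℚ :=
  .of fun i j ↦ if SlidesTo k (zpos P i) (zpos .empty j) then 1 else 0

variable {k p N : ℕ} {P : Partition}

lemma degree_betaNumbers (hN : P.parts N = 0) :
    (betaNumbers N P).degree = (betaNumbers N .empty).degree + P.size := by
  have hsize : P.size = ∑ i : Fin N, P.parts i := by
    rw [Partition.size, Fin.sum_univ_eq_sum_range, finsum_eq_sum_of_support_subset]
    intro i hi
    by_contra hiN
    have := P.antitone (not_lt.1 (mt (fun h ↦ Finset.mem_coe.2 (Finset.mem_range.2 h)) hiN))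
    exact hi (by lia)
  simp [Finsupp.degree_eq_sum, betaNumbers, hsize, Finset.sum_add_distrib, Partition.empty,
    add_comm]

lemma slidesTo_iff_betaNumbers (i j : Fin N) :
    SlidesTo k (zpos P i) (zpos .empty j) ↔ betaNumbers N .empty j ≤ betaNumbers N P i ∧
      k ∣ betaNumbers N P i - betaNumbers N .empty j := by
  rw [← add_sub_cancel_right (zpos P i) (N : ℤ), ← betaNumbers_cast,
    ← add_sub_cancel_right (zpos .empty j) (N : ℤ), ← betaNumbers_cast, SlidesTo,
    sub_le_sub_iff_right, Nat.cast_le]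
  refine and_congr_right fun h ↦ ?_
  rw [Int.modEq_comm, Int.modEq_iff_dvd, sub_sub_sub_cancel_right, ← Nat.cast_sub h,
    Int.natCast_dvd_natCast]

lemma coeff_alternant_mul_cycleIndex_psum (hk : 0 < k) (hN : P.parts N = 0)
    (hP : P.size = k * p) :
    coeff (betaNumbers N P) (alternant ℚ (betaNumbers N .empty) *
      cycleIndex (fun t ↦ psum (Fin N) ℚ (k * t)) p) = (slideMatrix k N P).det := by
  rw [coeff_alternant_mul, Matrix.det_apply]
  refine Finset.sum_congr rfl fun σ _ ↦ congrArg _ ?_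
  simp only [slideMatrix, Matrix.of_apply, Finset.prod_ite_zero, Finset.prod_const_one,
    slidesTo_iff_betaNumbers, forall_and, Finset.mem_univ, true_imp_iff]
  have hσ (j : Fin N) : (betaNumbers N .empty).mapDomain σ (σ j) = betaNumbers N .empty j := by
    rw [Finsupp.mapDomain_equiv_apply, Equiv.symm_apply_apply]
  have hle : (betaNumbers N .empty).mapDomain σ ≤ betaNumbers N P ↔
      ∀ j, betaNumbers N .empty j ≤ betaNumbers N P (σ j) := by
    rw [Finsupp.le_def, ← σ.forall_congr_right]
    simp only [hσ]
  by_cases h : (betaNumbers N .empty).mapDomain σ ≤ betaNumbers N P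
  · have hdegree : (betaNumbers N P - (betaNumbers N .empty).mapDomain σ).degree = k * p := by
      have := congrArg Finsupp.degree (tsub_add_cancel_of_le h)
      rw [map_add, Finsupp.degree_mapDomain, degree_betaNumbers hN] at this
      lia
    have hdvd : (∀ i, k ∣ (betaNumbers N P - (betaNumbers N .empty).mapDomain σ) i) ↔
        ∀ j, k ∣ betaNumbers N P (σ j) - betaNumbers N .empty j := by
      rw [← σ.forall_congr_right]
      simp only [Finsupp.tsub_apply, hσ]
    rw [if_pos h, coeff_cycleIndex_psum_mul hk]
    simp only [hdvd, hdegree, hle.1 h, implies_true, and_true, true_and]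
  · rw [if_neg h, if_neg fun h' ↦ h (hle.2 h'.1)]

theorem sum_chi_eq_det_slideMatrix (hk : 0 < k) (hN : P.parts N = 0) (hP : P.size = k * p) :
    ∑ μ : Nat.Partition p, (1 / (zpart μ.parts : ℚ)) * chi P (μ.parts.map fun x ↦ k * x) =
      (slideMatrix k N P).det := by
  rw [← coeff_alternant_mul_cycleIndex_psum hk hN hP, cycleIndex_eq_sum_partition, Finset.mul_sum,
    coeff_sum]
  refine Finset.sum_congr rfl fun μ _ ↦ ?_
  have hpos : ∀ x ∈ μ.parts.map fun x ↦ k * x, 0 < x := by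
    simpa [hk] using fun x hx ↦ μ.parts_pos hx
  rw [chi_eq_coeff hpos hN, Multiset.map_map, mul_smul_comm, coeff_smul, smul_eq_mul]
  rfl

end SlideMatrix

section Slides

variable {k : ℕ} {P : Partition}

lemma SlidesTo.refl (x : ℤ) : SlidesTo k x x := ⟨le_rfl, rfl⟩

lemma SlidesTo.trans {x y z : ℤ} (hxy : SlidesTo k x y) (hyz : SlidesTo k y z) : SlidesTo k x z :=
  ⟨hyz.1.trans hxy.1, hxy.2.trans hyz.2⟩

lemma slidesTo_iff_ediv (hk : 0 < k) {x y : ℤ} :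
    SlidesTo k x y ↔ x % k = y % k ∧ y / k ≤ x / k := by
  have hk' : (0 : ℤ) < k := by exact_mod_cast hk
  refine ⟨fun h ↦ ⟨h.2, Int.ediv_le_ediv hk' h.1⟩, fun ⟨hmod, hdiv⟩ ↦ ⟨?_, hmod⟩⟩
  have := mul_le_mul_of_nonneg_left hdiv hk'.le
  have := Int.emod_add_mul_ediv x k
  have := Int.emod_add_mul_ediv y k
  lia

lemma IsStep.partition_le {A B : Partition} {t : ℕ} (h : IsStep A B t) : B ≤ A := by
  rcases h with ⟨-, rfl⟩ | ⟨-, h⟩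
  · exact fun _ ↦ le_rfl
  · exact h.1

lemma IsStep.ncard_skew {A B : Partition} {t : ℕ} (h : IsStep A B t) : (A.skew B).ncard = t := by
  rcases h with ⟨rfl, rfl⟩ | ⟨-, h⟩
  · simp [Partition.skew]
  · exact h.2.2.2.2

lemma IsBeadMove.slidesTo {A B : Partition} {m m' : ℕ} (h : IsBeadMove A B m m') (hle : B ≤ A)
    (hk : k ∣ (A.skew B).ncard) (n : ℕ) : SlidesTo k (zpos A n) (zpos B (cycleFun m m' n)) := by
  have hjump := h.ncard_skew hle
  rw [cycleFun]
  split_ifs with hn hn'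
  · subst hn
    exact ⟨by lia, Int.modEq_comm.1 (Int.modEq_iff_dvd.2 (hjump ▸ Int.natCast_dvd_natCast.2 hk))⟩
  · rw [h.between (n - 1) (by lia) (by lia), Nat.sub_add_cancel (by lia)]
    exact .refl _
  · rcases lt_or_ge n m with hm | hm
    · rw [h.above n hm]
      exact .refl _
    · rw [h.below n (by lia)]
      exact .refl _

lemma StepTrack.slidesTo {A B : Partition} {f g : ℕ → ℕ} (h : StepTrack A B f g) (hle : B ≤ A)
    (hk : k ∣ (A.skew B).ncard) (i : ℕ) : SlidesTo k (zpos A (f i)) (zpos B (g i)) := by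
  rcases h with ⟨rfl, rfl⟩ | ⟨m, m', hmm', habove, hbetween, hbelow, rfl⟩
  · exact .refl _
  · exact IsBeadMove.slidesTo ⟨hmm', habove, hbetween, hbelow⟩ hle hk (f i)

lemma exists_perm_slidesTo {μ : List ℕ} (hμ : ∀ t ∈ μ, k ∣ t) {T : RHT P μ}
    {π : Equiv.Perm (Fin P.length)} (hπ : IsZeroPerm T π) :
    ∃ w : Equiv.Perm (Fin P.length), w.sign = π.sign ∧
      ∀ j, SlidesTo k (zpos P (w j)) (zpos .empty j) := by
  obtain ⟨q, hlast, hstep, hzero⟩ := hπ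
  have hslide (j) (i : Fin P.length) : SlidesTo k (zpos P i.rev) (zpos (T.chain j) (q j i)) := by
    induction j using Fin.reverseInduction with
    | last =>
      rw [T.chain_last, hlast i i.2, Fin.val_rev, Nat.sub_sub, add_comm 1]
      exact .refl _
    | cast j ih =>
      have hT := T.step j
      exact ih.trans ((hstep j).slidesTo hT.partition_le
        (hT.ncard_skew ▸ hμ _ (List.get_mem ..)) i)
  refine ⟨Fin.revPerm * π * Fin.revPerm, ?_, fun j ↦ ?_⟩
  · rw [Equiv.Perm.sign_mul, Equiv.Perm.sign_mul, mul_right_comm, Int.units_mul_self, one_mul]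
  · have := hslide 0 (π j.rev)
    rw [T.chain_zero, hzero, Nat.sub_sub, add_comm 1, ← Fin.val_rev, Fin.rev_rev] at this
    exact this

end Slides

section SlideTarget

variable {k N : ℕ} {P : Partition}

/-- The rightmost position left of the median to which a zero at position `x` can be brought by
moving it to the left, `k` places at a time. -/
def slideTarget (k : ℕ) (x : ℤ) : ℤ := x % k + min (x / k) (-1) * k

lemma slideTarget_emod (x : ℤ) : slideTarget k x % k = x % k := by
  rw [slideTarget, Int.add_mul_emod_self_right, Int.emod_emod_of_dvd x dvd_rfl]

lemma slideTarget_ediv (hk : 0 < k) (x : ℤ) : slideTarget k x / k = min (x / k) (-1) := by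
  have hk' : (0 : ℤ) < k := by exact_mod_cast hk
  rw [slideTarget, Int.add_mul_ediv_right _ _ hk'.ne',
    Int.ediv_eq_zero_of_lt (Int.emod_nonneg x hk'.ne') (Int.emod_lt_of_pos x hk'), zero_add]

lemma slideTarget_neg (hk : 0 < k) (x : ℤ) : slideTarget k x < 0 := by
  have hk' : (0 : ℤ) < k := by exact_mod_cast hk
  have := Int.emod_lt_of_pos x hk'
  have := mul_le_mul_of_nonneg_right (min_le_right (x / k) (-1)) hk'.le
  rw [slideTarget]
  lia

lemma slidesTo_slideTarget_iff (hk : 0 < k) {x y : ℤ} (hy : y < 0) :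
    SlidesTo k (slideTarget k x) y ↔ SlidesTo k x y := by
  have : y / k ≤ -1 := Int.le_sub_one_of_lt (Int.ediv_neg_of_neg_of_pos hy (by exact_mod_cast hk))
  rw [slidesTo_iff_ediv hk, slidesTo_iff_ediv hk, slideTarget_emod, slideTarget_ediv hk,
    le_min_iff, and_iff_left this]

lemma slideTarget_eq_of_injective (hk : 0 < k) {w : Equiv.Perm (Fin N)}
    (hw : ∀ j, SlidesTo k (zpos P (w j)) (zpos .empty j))
    (hinj : Function.Injective fun n ↦ slideTarget k (zpos P n)) (j : Fin N) :
    slideTarget k (zpos P (w j)) = zpos .empty j := by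
  induction j using WellFoundedLT.induction with
  | _ j ih =>
    have hj : zpos .empty j < 0 := by rw [zpos_empty]; lia
    have hle := ((slidesTo_slideTarget_iff hk hj).2 (hw j)).1
    have hneg := slideTarget_neg hk (zpos P (w j))
    by_contra hne
    rw [zpos_empty] at hle hne
    let i : Fin N := ⟨(-1 - slideTarget k (zpos P (w j))).toNat, by grind⟩
    have hi : zpos .empty i = slideTarget k (zpos P (w j)) := by
      simp only [zpos_empty, i]
      lia
    have hij : i < j := by
      simp only [Fin.lt_def, i]
      lia
    exact hij.ne (w.injective (Fin.ext (hinj ((ih i hij).trans hi))))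

lemma det_slideMatrix_empty : (slideMatrix k N .empty).det = 1 := by
  have htri : (slideMatrix k N .empty).BlockTriangular id := fun i j hij ↦
    if_neg fun h ↦ (zpos_strictAnti .empty (Fin.lt_def.1 hij)).not_ge h.1
  rw [Matrix.det_of_isUpperTriangular htri]
  exact Finset.prod_eq_one fun i _ ↦ if_pos (.refl _)

theorem det_slideMatrix_eq_sign (hk : 0 < k) {w : Equiv.Perm (Fin N)}
    (hw : ∀ j, SlidesTo k (zpos P (w j)) (zpos .empty j))
    (hinj : Function.Injective fun n ↦ slideTarget k (zpos P n)) :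
    (slideMatrix k N P).det = (w.sign : ℤ) := by
  have hperm : slideMatrix k N P = (slideMatrix k N .empty).submatrix w.symm id := by
    ext i j
    obtain ⟨i, rfl⟩ := w.surjective i
    have hj : zpos .empty j < 0 := by rw [zpos_empty]; lia
    simp only [slideMatrix, Matrix.submatrix_apply, Matrix.of_apply, Equiv.symm_apply_apply, id,
      ← slideTarget_eq_of_injective hk hw hinj i, slidesTo_slideTarget_iff hk hj]
  rw [hperm, Matrix.det_permute, det_slideMatrix_empty, mul_one, Equiv.Perm.sign_symm]

theorem exists_det_slideMatrix_eq_zero (hk : 0 < k)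
    (hinj : ¬ Function.Injective fun n ↦ slideTarget k (zpos P n)) :
    ∃ N, P.parts N = 0 ∧ (slideMatrix k N P).det = 0 := by
  simp only [Function.Injective, not_forall] at hinj
  obtain ⟨r, s, hrs, hne⟩ := hinj
  have hN := P.antitone (show P.length ≤ P.length + r + s + 1 by lia)
  rw [parts_length, Nat.le_zero] at hN
  refine ⟨_, hN, Matrix.det_zero_of_row_eq (i := ⟨r, by lia⟩) (j := ⟨s, by lia⟩)
    (by simpa using hne) (funext fun j ↦ ?_)⟩
  have hj : zpos .empty j < 0 := by rw [zpos_empty]; lia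
  have hiff : SlidesTo k (zpos P r) (zpos .empty j) ↔ SlidesTo k (zpos P s) (zpos .empty j) := by
    rw [← slidesTo_slideTarget_iff hk hj, hrs, slidesTo_slideTarget_iff hk hj]
  simp only [slideMatrix, Matrix.of_apply, hiff]

end SlideTarget

section Quotient

variable {k N : ℕ} {P A : Partition}

lemma ncard_isZeroAt (hN : A.parts N = 0) : {x | isZeroAt A x ∧ -(N : ℤ) ≤ x}.ncard = N := by
  have himage : {x | isZeroAt A x ∧ -(N : ℤ) ≤ x} = zpos A '' Set.Iio N := by
    ext x
    simp only [Set.mem_ofPred_eq, Set.mem_image, Set.mem_Iio, ← neg_le_zpos_iff hN]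
    exact ⟨fun ⟨⟨n, hn⟩, hx⟩ ↦ ⟨n, hn ▸ hx, hn⟩, fun ⟨n, hx, hn⟩ ↦ ⟨⟨n, hn⟩, hn ▸ hx⟩⟩
  rw [himage, Set.ncard_image_of_injective _ (zpos_strictAnti A).injective, Set.ncard_Iio_nat]

lemma isZeroAt_empty_iff {x : ℤ} : isZeroAt .empty x ↔ x < 0 := by
  simp only [isZeroAt, zpos_empty]
  exact ⟨fun ⟨n, hn⟩ ↦ by lia, fun hx ↦ ⟨(-x - 1).toNat, by lia⟩⟩

lemma eq_add_mul_iff (i : Fin k) {x j : ℤ} : x = i + j * k ↔ x % k = i ∧ x / k = j := by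
  have hk : (0 : ℤ) < k := by exact_mod_cast i.pos
  have := i.isLt
  rw [and_comm, Int.ediv_emod_unique hk, mul_comm, eq_comm]
  lia

lemma isZeroAt_empty_add_mul (i : Fin k) (j : ℤ) :
    isZeroAt .empty (i + j * k) ↔ isZeroAt .empty j := by
  have hi := i.isLt
  rw [isZeroAt_empty_iff, isZeroAt_empty_iff]
  exact ⟨fun h ↦ by nlinarith, fun h ↦ by nlinarith⟩

lemma ncard_runner (i : Fin k) (L : ℤ) :
    {j : ℤ | isZeroAt P (i + j * k) ∧ L ≤ j}.ncard =
      {n | zpos P n % k = i ∧ L ≤ zpos P n / k}.ncard := by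
  have himage : {j : ℤ | isZeroAt P (i + j * k) ∧ L ≤ j} =
      (fun n ↦ zpos P n / k) '' {n | zpos P n % k = i ∧ L ≤ zpos P n / k} := by
    ext j
    simp only [isZeroAt, eq_add_mul_iff, Set.mem_ofPred_eq, Set.mem_image]
    grind
  refine himage ▸ Set.InjOn.ncard_image fun m hm n hn hmn ↦ ?_
  refine (zpos_strictAnti P).injective ?_
  rw [(eq_add_mul_iff i).2 ⟨hm.1, hmn⟩, ← (eq_add_mul_iff i).2 ⟨hn.1, rfl⟩]

lemma exists_perm_nat_slidesTo (hN : P.parts N = 0) {w : Equiv.Perm (Fin N)}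
    (hw : ∀ j, SlidesTo k (zpos P (w j)) (zpos .empty j)) :
    ∃ σ : Equiv.Perm ℕ, (∀ n, SlidesTo k (zpos P (σ n)) (zpos .empty n)) ∧
      ∀ n, N ≤ n → zpos P (σ n) = zpos .empty n := by
  have hlarge (n : ℕ) (hn : N ≤ n) :
      zpos P (w.extendDomain Fin.equivSubtype n) = zpos .empty n := by
    rw [w.extendDomain_apply_not_subtype Fin.equivSubtype hn.not_gt, zpos_of_le hN hn, zpos_empty]
  refine ⟨w.extendDomain Fin.equivSubtype, fun n ↦ ?_, hlarge⟩
  by_cases hn : n < N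
  · rw [w.extendDomain_apply_subtype Fin.equivSubtype hn]
    exact hw ⟨n, hn⟩
  · rw [hlarge n (not_lt.1 hn)]
    exact .refl _

lemma ncard_runner_eq (hN : P.parts N = 0) {w : Equiv.Perm (Fin N)}
    (hw : ∀ j, SlidesTo k (zpos P (w j)) (zpos .empty j)) (i : Fin k) {L : ℕ} (hL : N ≤ L) :
    {j : ℤ | isZeroAt P (i + j * k) ∧ -(L : ℤ) ≤ j}.ncard = L := by
  obtain ⟨σ, hσ, hlarge⟩ := exists_perm_nat_slidesTo hN hw
  have hk : (0 : ℤ) < k := by exact_mod_cast i.pos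
  have hbound {x : ℤ} (hx : -(N : ℤ) ≤ x) : -(L : ℤ) ≤ x / k :=
    (Int.le_ediv_iff_mul_le hk).2 (by nlinarith)
  have hpreimage : σ ⁻¹' {n | zpos P n % k = i ∧ -(L : ℤ) ≤ zpos P n / k} =
      {n | zpos .empty n % k = i ∧ -(L : ℤ) ≤ zpos .empty n / k} := by
    ext n
    simp only [Set.mem_preimage, Set.mem_ofPred_eq]
    by_cases hn : N ≤ n
    · rw [hlarge n hn]
    · have hn' : -(N : ℤ) ≤ zpos .empty n := by rw [zpos_empty]; lia
      rw [(hσ n).2, and_iff_left (hbound hn'), and_iff_left (hbound (hn'.trans (hσ n).1))]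
  rw [ncard_runner, ← Set.ncard_preimage_of_injective_subset_range σ.injective (by simp),
    hpreimage, ← ncard_runner]
  simp only [isZeroAt_empty_add_mul]
  exact ncard_isZeroAt rfl

lemma isKQuotient_shift_eq_zero (hN : P.parts N = 0) {w : Equiv.Perm (Fin N)}
    (hw : ∀ j, SlidesTo k (zpos P (w j)) (zpos .empty j)) (i : Fin k) {d : ℤ}
    (h : ∀ j, isZeroAt A j ↔ isZeroAt P (i + (j + d) * k)) : d = 0 := by
  obtain ⟨M, hM⟩ := A.eventually_zero
  obtain ⟨L, hL⟩ : ∃ L : ℕ, (L : ℤ) = (M + N + d.natAbs : ℕ) - d :=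
    ⟨_, Int.toNat_of_nonneg (by lia)⟩
  have hshift : {j : ℤ | isZeroAt P (i + j * k) ∧ -(L : ℤ) ≤ j} =
      (· + d) '' {j | isZeroAt A j ∧ -((M + N + d.natAbs : ℕ) : ℤ) ≤ j} := by
    ext j
    simp only [h, Set.image_add_right, Set.mem_preimage, Set.mem_ofPred_eq, neg_add_cancel_right]
    refine and_congr_right fun _ ↦ ?_
    lia
  have hcard := ncard_runner_eq hN hw i (L := L) (by lia)
  rw [hshift, Set.ncard_image_of_injective _ (add_left_injective d),
    ncard_isZeroAt (hM _ (by lia))] at hcard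
  lia

lemma injOn_min_iff : Set.InjOn (fun x ↦ min x (-1)) {x | isZeroAt A x} ↔ A.parts 1 = 0 := by
  refine ⟨fun h ↦ ?_, fun h ↦ ?_⟩
  · by_contra hne
    have hzero := h (x₁ := zpos A 0) (x₂ := zpos A 1) ⟨0, rfl⟩ ⟨1, rfl⟩ (by
      simp only [zpos]
      lia)
    exact absurd ((zpos_strictAnti A).injective hzero) zero_ne_one
  · rintro _ ⟨m, rfl⟩ _ ⟨n, rfl⟩ hmn
    have hlow (n : ℕ) (hn : 1 ≤ n) := zpos_of_le h hn
    have hhigh : -1 ≤ zpos A 0 := by simp only [zpos]; lia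
    rcases m.eq_zero_or_pos with rfl | hm <;> rcases n.eq_zero_or_pos with rfl | hn <;> grind

lemma IsKQuotient.isZeroAt_iff {Q : Fin k → Partition} (hQ : IsKQuotient k P Q)
    (hN : P.parts N = 0) {w : Equiv.Perm (Fin N)}
    (hw : ∀ j, SlidesTo k (zpos P (w j)) (zpos .empty j)) (i : Fin k) (j : ℤ) :
    isZeroAt (Q i) j ↔ ∃ n, zpos P n % k = i ∧ zpos P n / k = j := by
  obtain ⟨d, hd⟩ := hQ i
  rw [hd, isKQuotient_shift_eq_zero hN hw i hd, add_zero]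
  simp only [isZeroAt, eq_add_mul_iff]

theorem IsKQuotient.injective_slideTarget_iff (hk : 0 < k) {Q : Fin k → Partition}
    (hQ : IsKQuotient k P Q) (hN : P.parts N = 0) {w : Equiv.Perm (Fin N)}
    (hw : ∀ j, SlidesTo k (zpos P (w j)) (zpos .empty j)) :
    Function.Injective (fun n ↦ slideTarget k (zpos P n)) ↔ ∀ i, (Q i).parts 1 = 0 := by
  simp only [← injOn_min_iff]
  have hzero := hQ.isZeroAt_iff hN hw
  refine ⟨fun hinj i x hx y hy hxy ↦ ?_, fun h r s hrs ↦ ?_⟩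
  · obtain ⟨r, hr, rfl⟩ := (hzero i x).1 hx
    obtain ⟨s, hs, rfl⟩ := (hzero i y).1 hy
    have hrs : slideTarget k (zpos P r) = slideTarget k (zpos P s) := by
      rw [slideTarget, slideTarget, hr, hs, show min _ _ = min _ _ from hxy]
    rw [hinj hrs]
  · have hk' : (0 : ℤ) < k := by exact_mod_cast hk
    have hmod := congrArg (· % (k : ℤ)) hrs
    have hdiv := congrArg (· / (k : ℤ)) hrs
    simp only [slideTarget_emod, slideTarget_ediv hk] at hmod hdiv
    have := Int.emod_nonneg (zpos P r) hk'.ne'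
    have := Int.emod_lt_of_pos (zpos P r) hk'
    let i : Fin k := ⟨(zpos P r % k).toNat, by lia⟩
    have hi : zpos P r % k = i := by simp only [i]; lia
    have hquot := h i ((hzero i _).2 ⟨r, hi, rfl⟩) ((hzero i _).2 ⟨s, hmod ▸ hi, rfl⟩) hdiv
    refine (zpos_strictAnti P).injective ?_
    rw [← Int.emod_add_mul_ediv (zpos P r) k, hmod, hquot, Int.emod_add_mul_ediv]

end Quotient

theorem partition_sum_eq_sign_or_zero_general {k p : ℕ} (hk : 0 < k) {P : Partition}
    (hP : P.size = k * p) {Q : Fin k → Partition} (hQ : IsKQuotient k P Q) {ν : List ℕ}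
    (hν : ∀ t ∈ ν, k ∣ t) {T : RHT P ν} {π : Equiv.Perm (Fin P.length)} (hπ : IsZeroPerm T π) :
    ((∀ i : Fin k, (Q i).parts 1 = 0) →
      ∑ μ : Nat.Partition p, (1 / (zpart μ.parts : ℚ)) *
        (chi P (μ.parts.map fun x ↦ k * x) : ℚ) = ((Equiv.Perm.sign π : ℤ) : ℚ)) ∧
    ((∃ i : Fin k, 0 < (Q i).parts 1) →
      ∑ μ : Nat.Partition p, (1 / (zpart μ.parts : ℚ)) *
        (chi P (μ.parts.map fun x ↦ k * x) : ℚ) = 0) := by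
  obtain ⟨w, hsign, hw⟩ := exists_perm_slidesTo hν hπ
  have hinj := hQ.injective_slideTarget_iff hk (parts_length P) hw
  refine ⟨fun hrow ↦ ?_, fun ⟨i, hi⟩ ↦ ?_⟩
  · rw [sum_chi_eq_det_slideMatrix hk (parts_length P) hP,
      det_slideMatrix_eq_sign hk hw (hinj.2 hrow), hsign]
  · obtain ⟨N, hN, hdet⟩ := exists_det_slideMatrix_eq_zero hk fun h ↦ hi.ne' (hinj.1 h i)
    rw [sum_chi_eq_det_slideMatrix hk hN hP, hdet]

/-- let `λ ⊢ kp` have empty `k`-core and `k`-quotient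
`(λ₁,…,λ_k)`. If each `λᵢ` is empty or has exactly one part, then
`Σ_{μ ⊢ p} (1/z_μ)·χ^λ_{kμ} = sign(π_λ)`; if some `λᵢ` has at least two nonzero
parts, the sum vanishes. -/
theorem partition_sum_eq_sign_or_zero (k p : ℕ) (hk : 2 ≤ k) (P : Partition)
    (hP : P.size = k * p) (hcore : IsKCore k P Partition.empty)
    (Q : Fin k → Partition) (hQ : IsKQuotient k P Q)
    (T₀ : RHT P (List.replicate p k)) (π : Equiv.Perm (Fin P.length))
    (hπ : IsZeroPerm T₀ π) :
    ((∀ i : Fin k, (Q i).parts 1 = 0) →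
      ∑ μ : Nat.Partition p, (1 / (zpart μ.parts : ℚ)) *
        (chi P (μ.parts.map fun x => k * x) : ℚ) =
          ((Equiv.Perm.sign π : ℤ) : ℚ)) ∧
    ((∃ i : Fin k, 0 < (Q i).parts 1) →
      ∑ μ : Nat.Partition p, (1 / (zpart μ.parts : ℚ)) *
        (chi P (μ.parts.map fun x => k * x) : ℚ) = 0) :=
  partition_sum_eq_sign_or_zero_general (by lia) hP hQ
    (fun t ht ↦ (List.eq_of_mem_replicate ht).symm.dvd) hπ

end RimHookPaper
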